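/- Proposition (bandit case). Assume AT ≥ 3. There is a universal constant c > 0 and a bandit algorithm taking as input a parameter λ ∈ (A/T, 1) and predictions Q̃ : 𝒜 → [0,1], which satisfies both of the following guarantees: (1) for every ε ≥ 0, if Q̃ is an ε-approximate distillation of Q*, then the expected regret is at most c·( ε·T + √(|𝒢|·T·log(AT)) + √(λ·A·T·log(AT)) ), where 𝒢 = {a ∈ 𝒜 \ {a*} : Q̃(a) ≥ Q*(a*) − ε}; (2) for an arbitrary choice of Q̃, the expected regret is at most c·√(T·A·log(AT)/λ). -/

import Mathlib

open MeasureTheory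
open scoped BigOperators Classical

noncomputable section

/-- Deterministic interaction of a bandit algorithm `π` with a pre-sampled reward tape `ω`
(where `ω (a, i)` is the reward obtained at the `(i+1)`-st pull of arm `a`):
`runBandit π ω t` is the history after `t` steps, as the list of (arm pulled, reward observed)
pairs, oldest first. -/
def runBandit {A T : ℕ} (π : List (Fin A × ℝ) → Fin A) (ω : Fin A × Fin T → ℝ) :
    ℕ → List (Fin A × ℝ)
  | 0 => []
  | t + 1 =>
      let hist := runBandit π ω t
      let a := π hist
      let i := (hist.filter fun p => decide (p.1 = a)).length
      hist ++ [(a, if hi : i < T then ω (a, ⟨i, hi⟩) else 0)]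

/-- The expected regret of the (deterministic) bandit algorithm `π` over `T` steps, when the
reward of each pull of arm `a` is drawn independently from `ν a` and arm `a` has mean reward
`Qs a` with optimal arm `astar`.  The randomness is a tape `ω : Fin A × Fin T → ℝ`, sampled
from the product measure, whose entry `ω (a, i)` is the reward of the `(i+1)`-st pull of
arm `a`. -/
def banditExpRegret {A T : ℕ} (ν : Fin A → Measure ℝ) [∀ a, SigmaFinite (ν a)]
    (Qs : Fin A → ℝ) (astar : Fin A) (π : List (Fin A × ℝ) → Fin A) : ℝ :=
  ∫ ω : Fin A × Fin T → ℝ,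
    (∑ t ∈ Finset.range T, (Qs astar - Qs (π (runBandit π ω t))))
      ∂(Measure.pi fun i : Fin A × Fin T => ν i.1)

/-!
The algorithm runs UCB for `⌈λT⌉` steps, and from then on pulls the arm whose prediction, clipped to
its confidence interval, is largest. By Hoeffding's inequality and a union bound, all confidence
intervals are correct except on an event that contributes at most a constant to the expected regret.
On the good event the regret is bounded by sums of widths of the intervals of the pulled arms, and a
sum of `t` such widths over a set `H` of arms is `O(√(|H| t log(AT)))`.

* After the UCB phase, an arm with gap larger than `ε` is pulled only if its prediction reaches
  `Q*(a*) - ε`, that is, if it lies in `𝒢`; its gap is then at most `ε` plus twice its width.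
* For arbitrary predictions, the most pulled arm of the UCB phase was pulled at least `λT / A`
  times. Its gap and all its later widths are therefore `O(√(A log(AT) / (λT)))`, and clipping
  forces the score of every arm pulled later to be no smaller than the lower confidence bound of
  this arm.
-/

namespace BanditPredictions

open Finset Real

section Counting

variable {α : Type*} [DecidableEq α] (act : ℕ → α)

lemma sum_count_comp_eq_sum_sum_range {M : Type*} [AddCommMonoid M] (f : ℕ → M) (H : Finset α)
    (t : ℕ) :
    ∑ s ∈ range t with act s ∈ H, f (Nat.count (act · = act s) s) =
      ∑ a ∈ H, ∑ n ∈ range (Nat.count (act · = a) t), f n := by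
  induction t with
  | zero => simp
  | succ t ih =>
    have new_pull (a : α) : ∑ n ∈ range (Nat.count (act · = a) (t + 1)), f n =
        (∑ n ∈ range (Nat.count (act · = a) t), f n) +
          if act t = a then f (Nat.count (act · = a) t) else 0 := by
      rw [Nat.count_succ]
      split_ifs <;> simp [sum_range_succ]
    rw [sum_filter, sum_range_succ, ← sum_filter, ih, sum_congr rfl fun a _ => new_pull a,
      sum_add_distrib, sum_ite_eq]

lemma sum_count_eq_card_filter (H : Finset α) (t : ℕ) :
    ∑ a ∈ H, Nat.count (act · = a) t = #{s ∈ range t | act s ∈ H} := by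
  simpa using (sum_count_comp_eq_sum_sum_range act (M := ℕ) (fun _ => 1) H t).symm

lemma exists_le_card_mul_count [Fintype α] [Nonempty α] (t : ℕ) :
    ∃ a, t ≤ Fintype.card α * Nat.count (act · = a) t := by
  obtain ⟨a, -, ha⟩ := exists_le_of_sum_le (s := univ) univ_nonempty
    (f := fun _ : α => t) (g := fun a => Fintype.card α * Nat.count (act · = a) t)
    (by simp [← mul_sum, sum_count_eq_card_filter])
  exact ⟨a, ha⟩

lemma exists_lt_count_add_one_eq_count {p : ℕ → Prop} [DecidablePred p] {t : ℕ}
    (ht : 0 < Nat.count p t) : ∃ s < t, p s ∧ Nat.count p s + 1 = Nat.count p t := by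
  induction t with
  | zero => simp at ht
  | succ t ih => grind

end Counting

lemma inv_sqrt_add_one_le (n : ℕ) : (√(n + 1))⁻¹ ≤ 2 * (√(n + 1) - √n) := by
  have hpos : 0 < √((n : ℝ) + 1) := by positivity
  rw [inv_le_iff_one_le_mul₀ hpos]
  nlinarith [sq_sqrt (Nat.cast_nonneg (α := ℝ) n), sq_sqrt (show (0 : ℝ) ≤ n + 1 by positivity),
    sq_nonneg (√((n : ℝ) + 1) - √n)]

lemma sum_range_inv_sqrt_add_one_le (k : ℕ) : ∑ n ∈ range k, (√((n : ℝ) + 1))⁻¹ ≤ 2 * √k := by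
  calc ∑ n ∈ range k, (√((n : ℝ) + 1))⁻¹
      ≤ ∑ n ∈ range k, 2 * (√((n + 1 : ℕ) : ℝ) - √n) :=
        sum_le_sum fun n _ => by simpa using inv_sqrt_add_one_le n
    _ = 2 * √k := by
        rw [← mul_sum, sum_range_sub fun n : ℕ => √(n : ℝ)]
        simp

lemma sum_sqrt_le_sqrt_card_mul_sum {ι : Type*} (s : Finset ι) {f : ι → ℝ} (hf : ∀ i, 0 ≤ f i) :
    ∑ i ∈ s, √(f i) ≤ √(#s * ∑ i ∈ s, f i) := by
  simpa [sqrt_mul] using sum_sqrt_mul_sqrt_le s (f := fun _ => 1) (fun _ => zero_le_one) hf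

/-- The half-width of the confidence interval for a mean reward after `n` pulls; `L` is the
logarithmic confidence level. The shift `n + 1` keeps it nontrivial for an arm never pulled. -/
def confidenceWidth (L : ℝ) (n : ℕ) : ℝ := √(2 * L / (n + 1))

lemma confidenceWidth_nonneg (L : ℝ) (n : ℕ) : 0 ≤ confidenceWidth L n := sqrt_nonneg _

lemma confidenceWidth_antitone {L : ℝ} (hL : 0 ≤ L) : Antitone (confidenceWidth L) :=
  fun m n hmn => by
    unfold confidenceWidth
    gcongr

/-- The half-width of the confidence interval of arm `a` at time `t`, when the arms are pulled in
the order `act`. -/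
def armWidth {α : Type*} [DecidableEq α] (L : ℝ) (act : ℕ → α) (t : ℕ) (a : α) : ℝ :=
  confidenceWidth L (Nat.count (act · = a) t)

lemma armWidth_nonneg {α : Type*} [DecidableEq α] (L : ℝ) (act : ℕ → α) (t : ℕ) (a : α) :
    0 ≤ armWidth L act t a := confidenceWidth_nonneg _ _

lemma sum_armWidth_le {α : Type*} [DecidableEq α] (act : ℕ → α) (L : ℝ)
    (H : Finset α) (t : ℕ) :
    ∑ s ∈ range t with act s ∈ H, armWidth L act s (act s) ≤
      2 * √(2 * L * (#H * t)) := by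
  have sum_width (k : ℕ) : ∑ n ∈ range k, confidenceWidth L n ≤ √(2 * L) * (2 * √k) := by
    simp_rw [confidenceWidth, sqrt_div' _ (Nat.cast_add_one_pos _).le, div_eq_mul_inv, ← mul_sum]
    gcongr
    exact sum_range_inv_sqrt_add_one_le k
  have sum_count : ∑ a ∈ H, (Nat.count (act · = a) t : ℝ) ≤ t := by
    exact_mod_cast (sum_count_eq_card_filter act H t).trans_le
      ((card_filter_le _ _).trans_eq (card_range t))
  calc ∑ s ∈ range t with act s ∈ H, armWidth L act s (act s)
      = ∑ a ∈ H, ∑ n ∈ range (Nat.count (act · = a) t), confidenceWidth L n :=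
        sum_count_comp_eq_sum_sum_range act _ H t
    _ ≤ ∑ a ∈ H, √(2 * L) * (2 * √(Nat.count (act · = a) t)) := sum_le_sum fun a _ => sum_width _
    _ = 2 * √(2 * L) * ∑ a ∈ H, √(Nat.count (act · = a) t) := by
        rw [mul_sum]
        exact sum_congr rfl fun a _ => by ring
    _ ≤ 2 * √(2 * L) * √(#H * t) := by
        gcongr
        refine (sum_sqrt_le_sqrt_card_mul_sum H fun a => Nat.cast_nonneg _).trans ?_
        gcongr
    _ = 2 * √(2 * L * (#H * t)) := by
        rw [sqrt_mul' (2 * L) (y := #H * t) (by positivity), mul_assoc]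

section GoodRun

variable {α : Type*} [DecidableEq α]

/-- The score at time `t` of an arm with empirical mean `m`, confidence half-width `w` and predicted
mean `q`: its upper confidence bound during the first `T₁` steps, and afterwards the prediction
clipped to the confidence interval. -/
def armScore (T₁ t : ℕ) (m w q : ℝ) : ℝ :=
  if t < T₁ then m + w else max (m - w) (min (m + w) q)

/-- A sequence of actions `act` that always maximizes `armScore`, where `est a n` is the estimate of
the mean reward `Q a` after `n` pulls of `a`, in the event that all confidence intervals up to `T`
pulls are correct. -/
structure IsGoodRun (T₁ T : ℕ) (L : ℝ) (Q q : α → ℝ) (est : α → ℕ → ℝ) (act : ℕ → α) : Prop where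
  abs_sub_le : ∀ a, ∀ n ≤ T, |est a n - Q a| ≤ confidenceWidth L n
  score_le : ∀ t a,
    armScore T₁ t (est a (Nat.count (act · = a) t)) (armWidth L act t a) (q a) ≤
      armScore T₁ t (est (act t) (Nat.count (act · = act t) t)) (armWidth L act t (act t))
        (q (act t))

namespace IsGoodRun

variable {T₁ T : ℕ} {L : ℝ} {Q q : α → ℝ} {est : α → ℕ → ℝ} {act : ℕ → α} {t : ℕ}

lemma abs_sub_le_armWidth (h : IsGoodRun T₁ T L Q q est act) (ht : t ≤ T) (a : α) :
    |est a (Nat.count (act · = a) t) - Q a| ≤ armWidth L act t a :=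
  h.abs_sub_le a _ ((Nat.count_le (p := (act · = a))).trans ht)

lemma sub_le_of_lt (h : IsGoodRun T₁ T L Q q est act) (ht₁ : t < T₁) (ht : t ≤ T) (a : α) :
    Q a - Q (act t) ≤ 2 * armWidth L act t (act t) := by
  have score_le := h.score_le t a
  simp only [armScore, if_pos ht₁] at score_le
  have est_a := abs_le.1 (h.abs_sub_le_armWidth ht a)
  have est_act := abs_le.1 (h.abs_sub_le_armWidth ht (act t))
  linarith

lemma sub_le_of_ge (h : IsGoodRun T₁ T L Q q est act) (ht₁ : T₁ ≤ t) (ht : t ≤ T) (a : α) :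
    Q a - Q (act t) ≤ 2 * armWidth L act t a + 2 * armWidth L act t (act t) := by
  have score_le := h.score_le t a
  simp only [armScore, if_neg ht₁.not_gt] at score_le
  have est_a := abs_le.1 (h.abs_sub_le_armWidth ht a)
  have est_act := abs_le.1 (h.abs_sub_le_armWidth ht (act t))
  have lower_le_upper := (le_max_left _ _).trans
    (score_le.trans (max_le (by linarith [armWidth_nonneg L act t (act t)]) (min_le_left _ _)))
  linarith

lemma le_or_le_add_of_ge (h : IsGoodRun T₁ T L Q q est act) (ht₁ : T₁ ≤ t) (ht : t ≤ T) {a : α}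
    {v : ℝ} (hQ : v ≤ Q a) (hq : v ≤ q a) :
    v ≤ Q (act t) ∨ v ≤ q (act t) ∧ v ≤ Q (act t) + 2 * armWidth L act t (act t) := by
  have score_le := h.score_le t a
  simp only [armScore, if_neg ht₁.not_gt] at score_le
  have est_a := abs_le.1 (h.abs_sub_le_armWidth ht a)
  have est_act := abs_le.1 (h.abs_sub_le_armWidth ht (act t))
  have v_le_score := (le_max_of_le_right (le_min (by linarith) hq)).trans score_le
  rcases le_max_iff.1 v_le_score with le_lower | le_min
  · exact .inl (by linarith)
  · obtain ⟨le_upper, le_prediction⟩ := le_min_iff.1 le_min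
    exact .inr ⟨le_prediction, by linarith⟩

lemma sub_le_of_distillation [Fintype α] (h : IsGoodRun T₁ T L Q q est act) (ht : t ≤ T)
    {best a : α} (hbest : ∀ b, Q b ≤ Q best) {ε : ℝ}
    (ha : (Q best - Q a) + max (Q a - q a) 0 ≤ ε) :
    Q best - Q (act t) ≤ ε
      + (if act t ∈ ({b | b ≠ best ∧ Q best - ε ≤ q b} : Finset α)
          then 2 * armWidth L act t (act t) else 0)
      + (if t ∈ range T₁ then 2 * armWidth L act t (act t) else 0) := by
  set G : Finset α := {b | b ≠ best ∧ Q best - ε ≤ q b}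
  have hQa : Q best - ε ≤ Q a := by linarith [le_max_right (Q a - q a) 0]
  have hqa : Q best - ε ≤ q a := by linarith [le_max_left (Q a - q a) 0]
  have hε : 0 ≤ ε := by linarith [hbest a]
  have bonus_nonneg (p : Prop) [Decidable p] :
      0 ≤ if p then 2 * armWidth L act t (act t) else 0 :=
    ite_nonneg (by linarith [armWidth_nonneg L act t (act t)]) le_rfl
  by_cases ht₁ : t < T₁
  · rw [if_pos (mem_range.2 ht₁)]
    linarith [h.sub_le_of_lt ht₁ ht best, bonus_nonneg (act t ∈ G), hε]
  rw [if_neg (mt mem_range.1 ht₁), add_zero]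
  rcases h.le_or_le_add_of_ge (not_lt.1 ht₁) ht hQa hqa with hle | ⟨hq, hle⟩
  · linarith [bonus_nonneg (act t ∈ G)]
  by_cases hact : act t = best
  · linarith [bonus_nonneg (act t ∈ G), congrArg Q hact, hε]
  · rw [if_pos (mem_filter.2 ⟨mem_univ _, hact, hq⟩)]
    linarith

theorem regret_le_of_distillation [Fintype α] (h : IsGoodRun T₁ T L Q q est act) (hT : T₁ ≤ T)
    {best a : α} (hbest : ∀ b, Q b ≤ Q best) {ε : ℝ}
    (ha : (Q best - Q a) + max (Q a - q a) 0 ≤ ε) :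
    ∑ t ∈ range T, (Q best - Q (act t)) ≤
      ε * T + 4 * √(2 * L * (#{b | b ≠ best ∧ Q best - ε ≤ q b} * T))
        + 4 * √(2 * L * (Fintype.card α * T₁)) := by
  set G : Finset α := {b | b ≠ best ∧ Q best - ε ≤ q b}
  calc ∑ t ∈ range T, (Q best - Q (act t))
      ≤ ∑ t ∈ range T, (ε + (if act t ∈ G then 2 * armWidth L act t (act t) else 0)
        + (if t ∈ range T₁ then 2 * armWidth L act t (act t) else 0)) :=
        sum_le_sum fun t ht => h.sub_le_of_distillation (mem_range.1 ht).le hbest ha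
    _ = ε * T + 2 * ∑ t ∈ range T with act t ∈ G, armWidth L act t (act t)
        + 2 * ∑ t ∈ range T₁ with act t ∈ univ, armWidth L act t (act t) := by
        simp only [sum_add_distrib, sum_const, card_range, nsmul_eq_mul, ← sum_filter,
          filter_mem_eq_inter, inter_eq_right.2 (range_mono hT), mul_sum, mem_univ, filter_true,
          mul_comm]
    _ ≤ _ := by
        have explore := sum_armWidth_le act L univ T₁
        have commit := sum_armWidth_le act L G T
        rw [card_univ] at explore
        linarith

lemma exists_sub_le_and_armWidth_le [Fintype α] (h : IsGoodRun T₁ T L Q q est act) (hT : T₁ ≤ T)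
    (hT₁ : 0 < T₁) (hL : 0 ≤ L) (best : α) :
    ∃ a, Q best - Q a ≤ 2 * √(2 * L * Fintype.card α / T₁) ∧
      ∀ t, T₁ ≤ t → armWidth L act t a ≤ √(2 * L * Fintype.card α / T₁) := by
  have : Nonempty α := ⟨best⟩
  obtain ⟨a, ha⟩ := exists_le_card_mul_count act T₁
  obtain ⟨s, hs, rfl, hcount⟩ := exists_lt_count_add_one_eq_count (p := (act · = a))
    (Nat.pos_of_mul_pos_left (hT₁.trans_le ha))
  have width_le : armWidth L act s (act s) ≤ √(2 * L * Fintype.card α / T₁) := by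
    have ha' : (T₁ : ℝ) ≤ Fintype.card α * (Nat.count (act · = act s) s + 1) := by
      exact_mod_cast hcount ▸ ha
    refine sqrt_le_sqrt ?_
    rw [div_le_div_iff₀ (by positivity) (Nat.cast_pos.2 hT₁), mul_assoc (2 * L)]
    gcongr
  refine ⟨act s, (h.sub_le_of_lt hs (hs.le.trans hT) best).trans (by gcongr), fun t ht => ?_⟩
  exact (confidenceWidth_antitone hL (Nat.count_monotone _ (hs.le.trans ht))).trans width_le

theorem regret_le [Fintype α] (h : IsGoodRun T₁ T L Q q est act) (hT : T₁ ≤ T) (hT₁ : 0 < T₁)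
    (hL : 0 ≤ L) (best : α) :
    ∑ t ∈ range T, (Q best - Q (act t)) ≤
      4 * (T * √(2 * L * Fintype.card α / T₁)) + 4 * √(2 * L * (Fintype.card α * T)) := by
  obtain ⟨a, gap_a, width_a⟩ := h.exists_sub_le_and_armWidth_le hT hT₁ hL best
  have gap_le : ∀ t ∈ range T, Q best - Q (act t) ≤
      4 * √(2 * L * Fintype.card α / T₁) + 2 * armWidth L act t (act t) := by
    intro t ht
    have htT := (mem_range.1 ht).le
    rcases lt_or_ge t T₁ with ht₁ | ht₁
    · linarith [h.sub_le_of_lt ht₁ htT best, sqrt_nonneg (2 * L * Fintype.card α / T₁)]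
    · linarith [h.sub_le_of_ge ht₁ htT a, width_a t ht₁]
  calc ∑ t ∈ range T, (Q best - Q (act t))
      ≤ ∑ t ∈ range T, (4 * √(2 * L * Fintype.card α / T₁) + 2 * armWidth L act t (act t)) :=
        sum_le_sum gap_le
    _ = 4 * (T * √(2 * L * Fintype.card α / T₁)) +
        2 * ∑ t ∈ range T with act t ∈ univ, armWidth L act t (act t) := by
        simp only [sum_add_distrib, sum_const, card_range, nsmul_eq_mul, mul_sum, mem_univ,
          filter_true]
        ring
    _ ≤ _ := by
        have explore := sum_armWidth_le act L univ T
        rw [card_univ] at explore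
        linarith

end IsGoodRun

end GoodRun

/-- A maximizer of `f`, chosen as a function of the set of all maximizers of `f` only. For finite
`α` this makes it depend measurably on `f`. -/
def argmax {α : Type*} [Nonempty α] (f : α → ℝ) : α :=
  Classical.epsilon fun a => ∀ b, f b ≤ f a

section Argmax

variable {α : Type*} [Finite α] [Nonempty α]

lemma le_argmax (f : α → ℝ) (a : α) : f a ≤ f (argmax f) :=
  Classical.epsilon_spec (Finite.exists_max f) a

lemma measurable_argmax [MeasurableSpace α] {Ω : Type*} [MeasurableSpace Ω] {f : Ω → α → ℝ}
    (hf : ∀ a, Measurable (f · a)) : Measurable fun ω => argmax (f ω) := by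
  have maximizers : Measurable fun ω a => ∀ b, f ω b ≤ f ω a :=
    measurable_pi_lambda _ fun a => Measurable.forall fun b =>
      measurable_mem.2 (measurableSet_le (hf b) (hf a))
  exact (Measurable.of_discrete (f := Classical.epsilon)).comp maximizers

end Argmax

section Algorithm

variable {A T : ℕ}

/-- The rewards of arm `a` recorded in the history `h`, oldest first. -/
def armRewards (h : List (Fin A × ℝ)) (a : Fin A) : List ℝ :=
  (h.filter fun p => decide (p.1 = a)).map Prod.snd

/-- The score of arm `a` given the history `h` and the predictions `q`. An arm never pulled has
empirical mean `0 / 0 = 0`. -/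
def historyScore (T₁ : ℕ) (L : ℝ) (q : Fin A → ℝ) (h : List (Fin A × ℝ)) (a : Fin A) : ℝ :=
  armScore T₁ h.length ((armRewards h a).sum / (armRewards h a).length)
    (confidenceWidth L (armRewards h a).length) (q a)

/-- The bandit algorithm that runs UCB for `T₁` steps, and from then on pulls the arm whose
prediction, clipped to its confidence interval, is largest. -/
def predictionUCB [NeZero A] (T₁ : ℕ) (L : ℝ) (q : Fin A → ℝ) (h : List (Fin A × ℝ)) : Fin A :=
  argmax (historyScore T₁ L q h)

/-- The arm that the algorithm `alg` pulls at time `t` on the reward tape `ω`. -/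
def action (alg : List (Fin A × ℝ) → Fin A) (ω : Fin A × Fin T → ℝ) (t : ℕ) : Fin A :=
  alg (runBandit alg ω t)

/-- The reward of the pull of arm `a` with index `i`, counted from `0`; it is `0` beyond the end of
the tape. -/
def tapeReward (ω : Fin A × Fin T → ℝ) (a : Fin A) (i : ℕ) : ℝ :=
  if hi : i < T then ω (a, ⟨i, hi⟩) else 0

/-- The mean of the first `n` rewards of arm `a`; it is `0` for `n = 0`. -/
def tapeMean (ω : Fin A × Fin T → ℝ) (a : Fin A) (n : ℕ) : ℝ :=
  (∑ i ∈ range n, tapeReward ω a i) / n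

lemma runBandit_succ (alg : List (Fin A × ℝ) → Fin A) (ω : Fin A × Fin T → ℝ) (t : ℕ) :
    runBandit alg ω (t + 1) = runBandit alg ω t ++ [(action alg ω t, tapeReward ω (action alg ω t)
      (armRewards (runBandit alg ω t) (action alg ω t)).length)] := by
  rw [armRewards, List.length_map]
  rfl

lemma length_runBandit (alg : List (Fin A × ℝ) → Fin A) (ω : Fin A × Fin T → ℝ) (t : ℕ) :
    (runBandit alg ω t).length = t := by
  induction t with
  | zero => rfl
  | succ t ih => simp [runBandit_succ, ih]

lemma armRewards_runBandit (alg : List (Fin A × ℝ) → Fin A) (ω : Fin A × Fin T → ℝ) (t : ℕ)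
    (a : Fin A) : armRewards (runBandit alg ω t) a =
      (List.range (Nat.count (action alg ω · = a) t)).map (tapeReward ω a) := by
  induction t generalizing a with
  | zero => rfl
  | succ t ih =>
    rw [runBandit_succ, Nat.count_succ, ih, armRewards, List.filter_append, List.map_append,
      ← armRewards, ih]
    split_ifs with hact
    · simp [hact, List.range_succ]
    · simp [hact]

lemma historyScore_runBandit (T₁ : ℕ) (L : ℝ) (q : Fin A → ℝ) (alg : List (Fin A × ℝ) → Fin A)
    (ω : Fin A × Fin T → ℝ) (t : ℕ) (a : Fin A) :
    historyScore T₁ L q (runBandit alg ω t) a =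
      armScore T₁ t (tapeMean ω a (Nat.count (action alg ω · = a) t))
        (armWidth L (action alg ω) t a) (q a) := by
  simp only [historyScore, length_runBandit, armRewards_runBandit, List.length_map,
    List.length_range, tapeMean, armWidth]
  rfl

/-- The reward tapes on which all confidence intervals up to `T` pulls are correct. -/
def goodTapes (T : ℕ) (L : ℝ) (Q : Fin A → ℝ) : Set (Fin A × Fin T → ℝ) :=
  {ω | ∀ a, ∀ n ≤ T, |tapeMean ω a n - Q a| ≤ confidenceWidth L n}

lemma isGoodRun_predictionUCB [NeZero A] (T₁ : ℕ) {L : ℝ} {Q : Fin A → ℝ} (q : Fin A → ℝ)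
    {ω : Fin A × Fin T → ℝ} (hω : ω ∈ goodTapes T L Q) :
    IsGoodRun T₁ T L Q q (tapeMean ω) (action (predictionUCB T₁ L q) ω) where
  abs_sub_le := hω
  score_le t a := by
    simp only [← historyScore_runBandit]
    exact le_argmax _ a

lemma measurable_tapeMean (a : Fin A) (n : ℕ) :
    Measurable fun ω : Fin A × Fin T → ℝ => tapeMean ω a n := by
  refine (Finset.measurable_sum _ fun i _ => ?_).div_const _
  unfold tapeReward
  split_ifs <;> fun_prop

lemma measurable_action_predictionUCB [NeZero A] (T₁ : ℕ) (L : ℝ) (q : Fin A → ℝ) (t : ℕ) :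
    Measurable fun ω : Fin A × Fin T → ℝ => action (predictionUCB T₁ L q) ω t := by
  induction t using Nat.strong_induction_on with
  | h t ih =>
  have measurable_count (a : Fin A) : Measurable fun ω : Fin A × Fin T → ℝ =>
      Nat.count (action (predictionUCB T₁ L q) ω · = a) t := by
    simp_rw [Nat.count_eq_card_filter_range, card_filter]
    exact Finset.measurable_sum _ fun s hs => Measurable.ite
      (measurableSet_eq_fun (ih s (mem_range.1 hs)) measurable_const)
      measurable_const measurable_const
  have measurable_score (a : Fin A) : Measurable fun p : (Fin A × Fin T → ℝ) × ℕ =>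
      armScore T₁ t (tapeMean p.1 a p.2) (confidenceWidth L p.2) (q a) := by
    refine measurable_from_prod_countable_left fun n => ?_
    have := measurable_tapeMean (T := T) a n
    simp only [armScore]
    split_ifs <;> fun_prop
  refine measurable_argmax fun a => ?_
  simp only [historyScore_runBandit, armWidth]
  simpa only [Function.comp_def, id] using
    (measurable_score a).comp (measurable_id.prodMk (measurable_count a))

end Algorithm

section Concentration

open ProbabilityTheory

lemma measureReal_le_abs_le_of_hasSubgaussianMGF {Ω : Type*} [MeasurableSpace Ω] {μ : Measure Ω}
    {X : Ω → ℝ} {c : NNReal} (hX : HasSubgaussianMGF X c μ) {ε : ℝ} (hε : 0 ≤ ε) :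
    μ.real {ω | ε ≤ |X ω|} ≤ 2 * exp (-ε ^ 2 / (2 * c)) := by
  have two_tails : {ω | ε ≤ |X ω|} = {ω | ε ≤ X ω} ∪ {ω | ε ≤ (-X) ω} := by
    ext ω
    exact le_abs (a := ε) (b := X ω)
  rw [two_tails, two_mul]
  exact (measureReal_union_le _ _).trans
    (add_le_add (hX.measure_ge_le hε) (hX.neg.measure_ge_le hε))

lemma measureReal_pi_le_abs_sum_sub_integral_le {ι : Type*} [Fintype ι] {ν : ι → Measure ℝ}
    [∀ i, IsProbabilityMeasure (ν i)] {a b : ℝ} (hν : ∀ i, ∀ᵐ x ∂ν i, x ∈ Set.Icc a b)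
    (s : Finset ι) {ε : ℝ} (hε : 0 ≤ ε) :
    (Measure.pi ν).real {ω | ε ≤ |∑ i ∈ s, (ω i - ∫ x, x ∂ν i)|} ≤
      2 * exp (-ε ^ 2 / (2 * (#s * ((b - a) / 2) ^ 2))) := by
  have subgaussian (i : ι) : HasSubgaussianMGF (fun ω : ι → ℝ => ω i - ∫ x, x ∂ν i)
      ((‖b - a‖₊ / 2) ^ 2) (Measure.pi ν) := by
    have eval_preserving := measurePreserving_eval ν i
    refine HasSubgaussianMGF.of_map (Y := fun ω : ι → ℝ => ω i) (X := fun x => x - ∫ x, x ∂ν i)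
      eval_preserving.aemeasurable ?_
    rw [show (Measure.pi ν).map (fun ω : ι → ℝ => ω i) = ν i from eval_preserving.map_eq]
    exact hasSubgaussianMGF_of_mem_Icc aemeasurable_id (hν i)
  have independent : iIndepFun (fun i (ω : ι → ℝ) => ω i - ∫ x, x ∂ν i) (Measure.pi ν) :=
    iIndepFun_pi (X := fun i x => x - ∫ x, x ∂ν i) fun i =>
      (measurable_id.sub_const _).aemeasurable
  have tail := measureReal_le_abs_le_of_hasSubgaussianMGF
    (HasSubgaussianMGF.sum_of_iIndepFun independent fun i (_ : i ∈ s) => subgaussian i) hε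
  simpa [div_pow] using tail

lemma integral_mem_Icc {μ : Measure ℝ} [IsProbabilityMeasure μ] {a b : ℝ}
    (hμ : ∀ᵐ x ∂μ, x ∈ Set.Icc a b) : ∫ x, x ∂μ ∈ Set.Icc a b :=
  (convex_Icc a b).integral_mem isClosed_Icc hμ (Integrable.of_mem_Icc a b aemeasurable_id hμ)

variable {A T : ℕ}

lemma tapeMean_eq_sum_castLE (ω : Fin A × Fin T → ℝ) (a : Fin A) {n : ℕ} (hn : n ≤ T) :
    tapeMean ω a n = (∑ i : Fin n, ω (a, Fin.castLE hn i)) / n := by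
  rw [tapeMean, sum_range]
  exact congrArg (· / (n : ℝ)) (sum_congr rfl fun i _ => dif_pos (i.2.trans_le hn))

lemma measurableSet_goodTapes (T : ℕ) (L : ℝ) (Q : Fin A → ℝ) :
    MeasurableSet (goodTapes T L Q) := by
  have (a : Fin A) (n : ℕ) := measurable_tapeMean (T := T) a n
  unfold goodTapes
  measurability

variable {ν : Fin A → Measure ℝ} [∀ a, IsProbabilityMeasure (ν a)] {Q : Fin A → ℝ}

lemma measureReal_confidenceWidth_lt_abs_sub_le (hν : ∀ a, ∀ᵐ x ∂ν a, x ∈ Set.Icc (0 : ℝ) 1)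
    (hQ : ∀ a, ∫ x, x ∂ν a = Q a)
    {L : ℝ} (hL : 0 ≤ L) (a : Fin A) {n : ℕ} (hn : 0 < n) (hnT : n ≤ T) :
    (Measure.pi fun i : Fin A × Fin T => ν i.1).real
      {ω | confidenceWidth L n < |tapeMean ω a n - Q a|} ≤ 2 * exp (-(2 * L)) := by
  have hn' : (1 : ℝ) ≤ n := by exact_mod_cast hn
  let indices : Finset (Fin A × Fin T) := {a} ×ˢ univ.map (Fin.castLEEmb hnT)
  have card_indices : #indices = n := by simp [indices]
  have deviation (ω : Fin A × Fin T → ℝ) :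
      ∑ i ∈ indices, (ω i - ∫ x, x ∂ν i.1) = n * (tapeMean ω a n - Q a) := by
    rw [tapeMean_eq_sum_castLE _ _ hnT]
    simp only [indices, singleton_product, hQ, sum_sub_distrib, sum_map,
      Function.Embedding.coeFn_mk, Fin.castLEEmb_apply, sum_const, card_map, card_univ,
      Fintype.card_fin, nsmul_eq_mul]
    field_simp
  have exponent_le : -(n * confidenceWidth L n) ^ 2 / (2 * (n * ((1 - 0) / 2) ^ 2)) ≤ -(2 * L) := by
    rw [mul_pow, confidenceWidth, sq_sqrt (by positivity), div_le_iff₀ (by positivity)]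
    field_simp
    nlinarith
  calc (Measure.pi fun i : Fin A × Fin T => ν i.1).real
        {ω | confidenceWidth L n < |tapeMean ω a n - Q a|}
      ≤ (Measure.pi fun i : Fin A × Fin T => ν i.1).real
        {ω | n * confidenceWidth L n ≤ |∑ i ∈ indices, (ω i - ∫ x, x ∂ν i.1)|} := by
        refine measureReal_mono fun ω hω => ?_
        simp only [Set.mem_ofPred_eq, deviation, abs_mul, Nat.abs_cast] at hω ⊢
        gcongr
    _ ≤ 2 * exp (-(n * confidenceWidth L n) ^ 2 / (2 * (#indices * ((1 - 0) / 2) ^ 2))) :=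
        measureReal_pi_le_abs_sum_sub_integral_le (fun i => hν i.1) indices
          (mul_nonneg n.cast_nonneg (confidenceWidth_nonneg L n))
    _ ≤ 2 * exp (-(2 * L)) := by
        rw [card_indices]
        gcongr

lemma compl_goodTapes_subset {L : ℝ} (hL : 1 ≤ L) (hQ : ∀ a, Q a ∈ Set.Icc (0 : ℝ) 1) :
    (goodTapes T L Q)ᶜ ⊆ ⋃ i ∈ (univ : Finset (Fin A)) ×ˢ Icc 1 T,
      {ω | confidenceWidth L i.2 < |tapeMean ω i.1 i.2 - Q i.1|} := by
  intro ω hω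
  simp only [goodTapes, Set.mem_compl_iff, Set.mem_ofPred_eq, not_forall, not_le] at hω
  obtain ⟨a, n, hnT, hω⟩ := hω
  have hn : n ≠ 0 := by
    rintro rfl
    have width_ge : 1 ≤ confidenceWidth L 0 := one_le_sqrt.2 <| by
      simp only [Nat.cast_zero, zero_add, div_one]
      linarith
    have : |tapeMean ω a 0 - Q a| ≤ 1 := by
      simpa [tapeMean, abs_of_nonneg (hQ a).1] using (hQ a).2
    linarith
  refine Set.mem_biUnion (x := (a, n)) ?_ hω
  exact mem_coe.2 (mem_product.2 ⟨mem_univ a, mem_Icc.2 ⟨Nat.one_le_iff_ne_zero.2 hn, hnT⟩⟩)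

lemma measureReal_compl_goodTapes_le (hν : ∀ a, ∀ᵐ x ∂ν a, x ∈ Set.Icc (0 : ℝ) 1)
    (hQ : ∀ a, ∫ x, x ∂ν a = Q a) {L : ℝ} (hL : 1 ≤ L) :
    (Measure.pi fun i : Fin A × Fin T => ν i.1).real (goodTapes T L Q)ᶜ ≤
      A * T * (2 * exp (-(2 * L))) := by
  have mean_mem (a : Fin A) : Q a ∈ Set.Icc (0 : ℝ) 1 := hQ a ▸ integral_mem_Icc (hν a)
  calc (Measure.pi fun i : Fin A × Fin T => ν i.1).real (goodTapes T L Q)ᶜ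
      ≤ _ := measureReal_mono (compl_goodTapes_subset hL mean_mem) (measure_ne_top _ _)
    _ ≤ _ := measureReal_biUnion_finset_le _ _
    _ ≤ ∑ i ∈ (univ : Finset (Fin A)) ×ˢ Icc 1 T, 2 * exp (-(2 * L)) :=
        sum_le_sum fun i hi => by
          obtain ⟨hi₁, hiT⟩ := mem_Icc.1 (mem_product.1 hi).2
          exact measureReal_confidenceWidth_lt_abs_sub_le hν hQ (by linarith) i.1 hi₁ hiT
    _ = A * T * (2 * exp (-(2 * L))) := by simp

end Concentration

section ExpectedRegret

lemma integral_le_add_mul_measureReal {Ω : Type*} [MeasurableSpace Ω] {μ : Measure Ω}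
    [IsProbabilityMeasure μ] {f : Ω → ℝ} (hf : Integrable f μ) {E : Set Ω} (hE : MeasurableSet E)
    {B C : ℝ} (hB : 0 ≤ B) (hfB : ∀ ω ∉ E, f ω ≤ B) (hfC : ∀ ω ∈ E, f ω ≤ C) :
    ∫ ω, f ω ∂μ ≤ B + C * μ.real E := by
  have le_indicator (ω : Ω) : f ω ≤ B + E.indicator (fun _ => C) ω := by
    by_cases hω : ω ∈ E
    · rw [Set.indicator_of_mem hω]
      linarith [hfC ω hω]
    · rw [Set.indicator_of_notMem hω]
      linarith [hfB ω hω]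
  have integrable_indicator : Integrable (E.indicator fun _ => C) μ :=
    (integrable_const C).indicator hE
  calc ∫ ω, f ω ∂μ
      ≤ ∫ ω, (B + E.indicator (fun _ => C) ω) ∂μ :=
        integral_mono hf ((integrable_const B).add integrable_indicator) le_indicator
    _ = B + C * μ.real E := by
        rw [integral_add (integrable_const B) integrable_indicator, integral_indicator_const C hE]
        simp [mul_comm]

lemma one_le_log_of_three_le {x : ℝ} (hx : 3 ≤ x) : 1 ≤ log x :=
  (le_log_iff_exp_le (by linarith)).2 (exp_one_lt_three.le.trans hx)

variable {A T : ℕ} [NeZero A]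

lemma integrable_regret_predictionUCB (μ : Measure (Fin A × Fin T → ℝ)) [IsFiniteMeasure μ]
    (T₁ : ℕ) (L : ℝ) (Q q : Fin A → ℝ) (best : Fin A) :
    Integrable (fun ω => ∑ t ∈ range T, (Q best - Q (action (predictionUCB T₁ L q) ω t))) μ := by
  refine integrable_finsetSum _ fun t _ => (integrable_const _).sub ?_
  exact (Integrable.of_finite (f := Q)).comp_measurable
    (measurable_action_predictionUCB T₁ L q t)

variable {ν : Fin A → Measure ℝ} [∀ a, IsProbabilityMeasure (ν a)] {Q : Fin A → ℝ}

lemma horizon_mul_measureReal_compl_goodTapes_le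
    (hν : ∀ a, ∀ᵐ x ∂ν a, x ∈ Set.Icc (0 : ℝ) 1) (hQ : ∀ a, ∫ x, x ∂ν a = Q a)
    (hAT : 3 ≤ A * T) :
    T * (Measure.pi fun i : Fin A × Fin T => ν i.1).real (goodTapes T (log (A * T)) Q)ᶜ ≤ 2 := by
  have hAT' : (3 : ℝ) ≤ A * T := by exact_mod_cast hAT
  have hA : (1 : ℝ) ≤ A := by exact_mod_cast NeZero.one_le
  have exp_eq : exp (-(2 * log (A * T))) = ((A * T : ℝ) ^ 2)⁻¹ := by
    rw [exp_neg, two_mul, exp_add, exp_log (by linarith), sq]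
  calc T * (Measure.pi fun i : Fin A × Fin T => ν i.1).real (goodTapes T (log (A * T)) Q)ᶜ
      ≤ T * (A * T * (2 * exp (-(2 * log (A * T))))) := by
        gcongr
        exact measureReal_compl_goodTapes_le hν hQ (one_le_log_of_three_le hAT')
    _ = 2 / A := by
        have hT : (T : ℝ) ≠ 0 := Nat.cast_ne_zero.2 (right_ne_zero_of_mul (by lia : A * T ≠ 0))
        rw [exp_eq]
        field_simp
    _ ≤ 2 := div_le_self zero_le_two hA

lemma banditExpRegret_predictionUCB_le
    (hν : ∀ a, ∀ᵐ x ∂ν a, x ∈ Set.Icc (0 : ℝ) 1) (hQ : ∀ a, ∫ x, x ∂ν a = Q a)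
    (hAT : 3 ≤ A * T) {T₁ : ℕ} {q : Fin A → ℝ} {best : Fin A} {B : ℝ} (hB : 0 ≤ B)
    (hregret : ∀ est act, IsGoodRun T₁ T (log (A * T)) Q q est act →
      ∑ t ∈ range T, (Q best - Q (act t)) ≤ B) :
    banditExpRegret (T := T) ν Q best (predictionUCB T₁ (log (A * T)) q) ≤ B + 2 := by
  have mean_mem (a : Fin A) : Q a ∈ Set.Icc (0 : ℝ) 1 := hQ a ▸ integral_mem_Icc (hν a)
  have gap_le_one (a : Fin A) : Q best - Q a ≤ 1 := by linarith [(mean_mem best).2, (mean_mem a).1]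
  refine (integral_le_add_mul_measureReal (C := T)
    (integrable_regret_predictionUCB _ T₁ (log (A * T)) Q q best)
    (measurableSet_goodTapes T (log (A * T)) Q).compl hB (fun ω hω => ?_) (fun ω _ => ?_)).trans ?_
  · exact hregret _ _ (isGoodRun_predictionUCB T₁ q (not_not.1 hω))
  · calc ∑ t ∈ range T, (Q best - Q (action (predictionUCB T₁ (log (A * T)) q) ω t))
        ≤ ∑ _ ∈ range T, (1 : ℝ) := sum_le_sum fun t _ => gap_le_one _
      _ = T := by simp
  · linarith [horizon_mul_measureReal_compl_goodTapes_le hν hQ hAT]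

lemma sqrt_le_two_mul_sqrt {x y : ℝ} (h : x ≤ 4 * y) : √x ≤ 2 * √y := by
  calc √x ≤ √(2 ^ 2 * y) := sqrt_le_sqrt (by linarith)
    _ = 2 * √y := by rw [sqrt_mul (by norm_num), sqrt_sq zero_le_two]

theorem banditExpRegret_predictionUCB_le_of_distillation
    (hν : ∀ a, ∀ᵐ x ∂ν a, x ∈ Set.Icc (0 : ℝ) 1) (hQ : ∀ a, ∫ x, x ∂ν a = Q a)
    (hAT : 3 ≤ A * T) {q : Fin A → ℝ} {best a : Fin A} (hbest : ∀ b, Q b ≤ Q best) {lam ε : ℝ}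
    (hlamT : 1 ≤ lam * T) (hlam : lam ≤ 1) (ha : (Q best - Q a) + max (Q a - q a) 0 ≤ ε) :
    banditExpRegret (T := T) ν Q best (predictionUCB ⌈lam * T⌉₊ (log (A * T)) q) ≤
      18 * (ε * T + √(#{b | b ≠ best ∧ Q best - ε ≤ q b} * T * log (A * T))
        + √(lam * A * T * log (A * T))) := by
  set G : Finset (Fin A) := {b | b ≠ best ∧ Q best - ε ≤ q b}
  set L := log (A * T)
  have hA : (1 : ℝ) ≤ A := by exact_mod_cast NeZero.one_le
  have hL : 1 ≤ L := one_le_log_of_three_le (by exact_mod_cast hAT)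
  have hε : 0 ≤ ε * T := mul_nonneg
    (by linarith [hbest a, le_max_right (Q a - q a) 0]) T.cast_nonneg
  have explore : √(2 * L * (A * ⌈lam * T⌉₊)) ≤ 2 * √(lam * A * T * L) := by
    refine sqrt_le_two_mul_sqrt ?_
    calc 2 * L * (A * ⌈lam * T⌉₊) ≤ 2 * L * (A * (2 * (lam * T))) := by
          gcongr
          exact Nat.ceil_le_two_mul (by linarith)
      _ = 4 * (lam * A * T * L) := by ring
  have commit : √(2 * L * (#G * T)) ≤ 2 * √(#G * T * L) :=
    sqrt_le_two_mul_sqrt (by nlinarith [show (0 : ℝ) ≤ #G * T * L by positivity])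
  have one_le : 1 ≤ √(lam * A * T * L) := one_le_sqrt.2 <| by
    calc (1 : ℝ) ≤ lam * T * A * L := one_le_mul_of_one_le_of_one_le
          (one_le_mul_of_one_le_of_one_le hlamT hA) hL
      _ = lam * A * T * L := by ring
  refine (banditExpRegret_predictionUCB_le hν hQ hAT
    (B := ε * T + 4 * √(2 * L * (#G * T)) + 4 * √(2 * L * (A * ⌈lam * T⌉₊))) (by positivity)
    fun est act h => ?_).trans (by linarith [sqrt_nonneg (#G * T * L)])
  simpa only [Fintype.card_fin] using h.regret_le_of_distillation
    (Nat.ceil_le.2 (mul_le_of_le_one_left T.cast_nonneg hlam)) hbest ha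

theorem banditExpRegret_predictionUCB_le_sqrt_div
    (hν : ∀ a, ∀ᵐ x ∂ν a, x ∈ Set.Icc (0 : ℝ) 1) (hQ : ∀ a, ∫ x, x ∂ν a = Q a)
    (hAT : 3 ≤ A * T) (q : Fin A → ℝ) (best : Fin A) {lam : ℝ}
    (hlamT : 1 ≤ lam * T) (hlam : lam ≤ 1) :
    banditExpRegret (T := T) ν Q best (predictionUCB ⌈lam * T⌉₊ (log (A * T)) q) ≤
      18 * √(T * A * log (A * T) / lam) := by
  set L := log (A * T)
  have hAT' : (3 : ℝ) ≤ A * T := by exact_mod_cast hAT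
  have hL : 1 ≤ L := one_le_log_of_three_le hAT'
  have hT₁ : 0 < ⌈lam * T⌉₊ := Nat.ceil_pos.2 (by linarith)
  have hlam₀ : 0 < lam := pos_of_mul_pos_left (by linarith) T.cast_nonneg
  have hTAL : 1 ≤ T * A * L :=
    one_le_mul_of_one_le_of_one_le (by linarith) hL
  have le_div_lam : T * A * L ≤ T * A * L / lam := le_div_self (by linarith) hlam₀ hlam
  have explore : √(2 * L * (A * T)) ≤ 2 * √(T * A * L / lam) :=
    sqrt_le_two_mul_sqrt (by linarith)
  have commit : T * √(2 * L * A / ⌈lam * T⌉₊) ≤ 2 * √(T * A * L / lam) := by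
    have hT : 0 < (T : ℝ) := pos_of_mul_pos_right (by linarith) hlam₀.le
    rw [← sqrt_sq hT.le, ← sqrt_mul (sq_nonneg _), sqrt_sq hT.le]
    refine sqrt_le_two_mul_sqrt ?_
    calc (T : ℝ) ^ 2 * (2 * L * A / ⌈lam * T⌉₊) ≤ T ^ 2 * (2 * L * A / (lam * T)) := by
          gcongr
          exact Nat.le_ceil _
      _ = 2 * (T * A * L / lam) := by field_simp
      _ ≤ 4 * (T * A * L / lam) := by linarith
  have one_le : 1 ≤ √(T * A * L / lam) := one_le_sqrt.2 (hTAL.trans le_div_lam)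
  refine (banditExpRegret_predictionUCB_le hν hQ hAT
    (B := 4 * (T * √(2 * L * A / ⌈lam * T⌉₊)) + 4 * √(2 * L * (A * T))) (by positivity)
    fun est act h => ?_).trans (by linarith)
  simpa only [Fintype.card_fin] using h.regret_le
    (Nat.ceil_le.2 (mul_le_of_le_one_left T.cast_nonneg hlam)) hT₁ (by linarith) best

end ExpectedRegret

lemma one_le_mul_of_div_lt {m n : ℕ} (hmn : 0 < m * n) {x : ℝ} (hx : (m : ℝ) / n < x) :
    1 ≤ x * n := by
  have hm : (1 : ℝ) ≤ m := by exact_mod_cast Nat.pos_of_mul_pos_right hmn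
  have hn : (0 : ℝ) < n := by exact_mod_cast Nat.pos_of_mul_pos_left hmn
  exact hm.trans ((div_lt_iff₀ hn).1 hx).le

end BanditPredictions

theorem bandit_predictions_guarantee_general :
    ∃ c : ℝ, 0 < c ∧
      ∀ A T : ℕ, 3 ≤ A * T →
        ∃ Alg : ℝ → (Fin A → ℝ) → List (Fin A × ℝ) → Fin A,
          ∀ (ν : Fin A → Measure ℝ) [∀ a, IsProbabilityMeasure (ν a)],
            ∀ (Qs : Fin A → ℝ) (astar : Fin A) (lam : ℝ) (Qt : Fin A → ℝ),
            (∀ a, ν a (Set.Icc (0 : ℝ) 1)ᶜ = 0) →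
            (∀ a, (∫ x, x ∂(ν a)) = Qs a) →
            (∀ a, Qs a ≤ Qs astar) →
            1 ≤ lam * T → lam ≤ 1 →
            ((∀ ε : ℝ,
                (∃ a, (Qs astar - Qs a) + max (Qs a - Qt a) 0 ≤ ε) →
                banditExpRegret (T := T) ν Qs astar (Alg lam Qt) ≤
                  c * (ε * T
                    + Real.sqrt
                        (((Finset.univ.filter fun a : Fin A =>
                            a ≠ astar ∧ Qs astar - ε ≤ Qt a).card : ℝ) * T * Real.log (A * T))
                    + Real.sqrt (lam * A * T * Real.log (A * T)))) ∧
              banditExpRegret (T := T) ν Qs astar (Alg lam Qt) ≤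
                c * Real.sqrt (T * A * Real.log (A * T) / lam)) := by
  refine ⟨18, by norm_num, fun A T hAT => ?_⟩
  have : NeZero A := ⟨left_ne_zero_of_mul (by lia : A * T ≠ 0)⟩
  refine ⟨fun lam Qt => BanditPredictions.predictionUCB ⌈lam * T⌉₊ (Real.log (A * T)) Qt,
    fun ν _ Qs astar lam Qt hν hQs hopt hlamT hlam => ⟨fun ε ⟨a, ha⟩ => ?_, ?_⟩⟩
  · exact BanditPredictions.banditExpRegret_predictionUCB_le_of_distillation hν hQs hAT hopt
      hlamT hlam ha
  · exact BanditPredictions.banditExpRegret_predictionUCB_le_sqrt_div hν hQs hAT Qt astar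
      hlamT hlam

/-- **Proposition (bandit case).**  Assume `AT ≥ 3`.  There is a universal constant `c > 0`
and a bandit algorithm taking as input a parameter `λ ∈ (A/T, 1)` and predictions
`Q̃ : 𝒜 → [0,1]` such that:
(1) for every `ε ≥ 0`, if `Q̃` is an ε-approximate distillation of `Q^*`, the expected regret
is at most `c (εT + √(|𝒢| T log(AT)) + √(λ A T log(AT)))`, where
`𝒢 = {a ≠ a^* : Q̃(a) ≥ Q^*(a^*) − ε}`; and
(2) for arbitrary `Q̃`, the expected regret is at most `c √(T A log(AT)/λ)`. -/
theorem bandit_predictions_guarantee :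
    ∃ c : ℝ, 0 < c ∧
      ∀ A T : ℕ, 3 ≤ A * T →
        ∃ Alg : ℝ → (Fin A → ℝ) → List (Fin A × ℝ) → Fin A,
          ∀ (ν : Fin A → Measure ℝ) [∀ a, IsProbabilityMeasure (ν a)],
            ∀ (Qs : Fin A → ℝ) (astar : Fin A) (lam : ℝ) (Qt : Fin A → ℝ),
            (∀ a, ν a (Set.Icc (0 : ℝ) 1)ᶜ = 0) →
            (∀ a, (∫ x, x ∂(ν a)) = Qs a) →
            (∀ a, Qs a ∈ Set.Icc (0 : ℝ) 1) →
            (∀ a, a ≠ astar → Qs a < Qs astar) →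
            (A : ℝ) / T < lam → lam < 1 →
            (∀ a, Qt a ∈ Set.Icc (0 : ℝ) 1) →
            -- (1) accurate predictions
            ((∀ ε : ℝ, 0 ≤ ε →
                (∃ a, (Qs astar - Qs a) + max (Qs a - Qt a) 0 ≤ ε) →
                banditExpRegret (T := T) ν Qs astar (Alg lam Qt) ≤
                  c * (ε * T
                    + Real.sqrt
                        (((Finset.univ.filter fun a : Fin A =>
                            a ≠ astar ∧ Qs astar - ε ≤ Qt a).card : ℝ) * T * Real.log (A * T))
                    + Real.sqrt (lam * A * T * Real.log (A * T)))) ∧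
            -- (2) robustness: arbitrary predictions
              banditExpRegret (T := T) ν Qs astar (Alg lam Qt) ≤
                c * Real.sqrt (T * A * Real.log (A * T) / lam)) := by
  obtain ⟨c, hc, bound⟩ := bandit_predictions_guarantee_general
  refine ⟨c, hc, fun A T hAT => (bound A T hAT).imp fun Alg hAlg ν _ Qs astar lam Qt hν hQs _ hopt
    hlamT hlam _ => ?_⟩
  obtain ⟨distilled, robust⟩ := hAlg ν Qs astar lam Qt hν hQs
    (fun a => (eq_or_ne a astar).elim (fun h => h ▸ le_rfl) fun h => (hopt a h).le)
    (BanditPredictions.one_le_mul_of_div_lt (by lia) hlamT) hlam.le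
  exact ⟨fun ε _ => distilled ε, robust⟩
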